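/- arXiv:2204.00935 — 3 statements merged into one kernel-verified Lean document; each statement's English description precedes it below -/
import Mathlib

section
/- For every d > 0 and every y_T, z_T ∈ ℝ, the explicit 3×3 matrix R_D^T whose columns are c₁ = (d, −y_T, −z_T)/√(d²+y_T²+z_T²), c₂ = (y_T, d, 0)/√(d²+y_T²), and c₃ = (d z_T, −y_T z_T, d²+y_T²)/(√(d²+y_T²+z_T²)·√(d²+y_T²)) is a rotation matrix, i.e., (R_D^T)^⊤ R_D^T = I₃ and det R_D^T = 1. -/
open Matrix

/-- The rotation matrix `R_D^T` from the desired frame to the target frame, with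
characteristic distance `d` and cross-track errors `yT, zT`; its columns are
`c₁ = (d, −yT, −zT)/√(d²+yT²+zT²)`, `c₂ = (yT, d, 0)/√(d²+yT²)`, and
`c₃ = (d·zT, −yT·zT, d²+yT²)/(√(d²+yT²+zT²)·√(d²+yT²))`. -/
noncomputable def RDT (d yT zT : ℝ) : Matrix (Fin 3) (Fin 3) ℝ :=
  Matrix.of fun i j =>
    ![(fun k => ![d, -yT, -zT] k / Real.sqrt (d ^ 2 + yT ^ 2 + zT ^ 2)),
      (fun k => ![yT, d, 0] k / Real.sqrt (d ^ 2 + yT ^ 2)),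
      (fun k => ![d * zT, -yT * zT, d ^ 2 + yT ^ 2] k /
        (Real.sqrt (d ^ 2 + yT ^ 2 + zT ^ 2) * Real.sqrt (d ^ 2 + yT ^ 2)))] j i

/-- for every `d > 0` and every `yT, zT ∈ ℝ`, the matrix `R_D^T` is a rotation
matrix: `(R_D^T)ᵀ R_D^T = I₃` and `det R_D^T = 1`. -/
theorem RDT_mem_SO3 (d yT zT : ℝ) (hd : 0 < d) :
    (RDT d yT zT)ᵀ * RDT d yT zT = 1 ∧ (RDT d yT zT).det = 1 := by
  have hP : 0 < d ^ 2 + yT ^ 2 := by positivity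
  have hQ : 0 < d ^ 2 + yT ^ 2 + zT ^ 2 := by positivity
  have ha := Real.sqrt_pos.2 hQ
  have hb := Real.sqrt_pos.2 hP
  have ha2 := Real.sq_sqrt hQ.le
  have hb2 := Real.sq_sqrt hP.le
  unfold RDT
  generalize Real.sqrt (d ^ 2 + yT ^ 2 + zT ^ 2) = a at *
  generalize Real.sqrt (d ^ 2 + yT ^ 2) = b at *
  have ha0 := ha.ne'
  have hb0 := hb.ne'
  constructor
  · ext i j
    fin_cases i <;> fin_cases j <;>
      simp [Matrix.mul_apply, Fin.sum_univ_three] <;> field_simp <;> grind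
  · simp [Matrix.det_fin_three]
    field_simp
    grind
end

section
/- Let R̃ : ℝ → ℝ^{3×3} be differentiable with R̃(t) ∈ SO(3) for all t, and suppose R̃′(t) = R̃(t)·(ω_W(t))^∧ − (ω_D(t))^∧·R̃(t), where ω_W(t) = [p(t), q(t), r(t)]^⊤ and ω_D : ℝ → ℝ³ are continuous. Then the attitude error Ψ(R̃(t)) ≜ (1/2)(1 − R̃₁₁(t)) satisfies d/dt Ψ(R̃(t)) = e_{R̃}(t)^⊤ ( [q(t), r(t)]^⊤ − Π_R · R̃(t)^⊤ · ω_D(t) ), where e_{R̃}(t) ≜ (1/2)[R̃₁₃(t), −R̃₁₂(t)]^⊤. -/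
open Matrix

attribute [local instance] Matrix.normedAddCommGroup Matrix.normedSpace

/-- The hat map `(ξ)^∧` sending a vector in ℝ³ to a skew-symmetric 3×3 matrix. -/
def hatMap (ξ : Fin 3 → ℝ) : Matrix (Fin 3) (Fin 3) ℝ :=
  !![0, -ξ 2, ξ 1; ξ 2, 0, -ξ 0; -ξ 1, ξ 0, 0]

/-- The 2×3 projection matrix `Π_R = [[0,1,0],[0,0,1]]`. -/
def PiR : Matrix (Fin 2) (Fin 3) ℝ := !![0, 1, 0; 0, 0, 1]

/-- The attitude error function `Ψ(R) = (1/2)(1 − R₁₁)`. -/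
noncomputable def Psi (R : Matrix (Fin 3) (Fin 3) ℝ) : ℝ := (1 / 2 : ℝ) * (1 - R 0 0)

/-- The attitude error vector `e_R = (1/2)[R₁₃, −R₁₂]ᵀ`. -/
noncomputable def eR (R : Matrix (Fin 3) (Fin 3) ℝ) : Fin 2 → ℝ :=
  ![R 0 2 / 2, -(R 0 1) / 2]

/-- attitude error dynamics. If `R̃(t) ∈ SO(3)` satisfies
`R̃′ = R̃(ω_W)^∧ − (ω_D)^∧ R̃` with `ω_W = [p, q, r]ᵀ`, then
`d/dt Ψ(R̃(t)) = e_{R̃}ᵀ([q, r]ᵀ − Π_R R̃ᵀ ω_D)`. -/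
theorem attitude_error_dynamics
    (Rt : ℝ → Matrix (Fin 3) (Fin 3) ℝ)
    (pp q r : ℝ → ℝ) (ωD : ℝ → Fin 3 → ℝ)
    (hSO : ∀ t : ℝ, (Rt t)ᵀ * Rt t = 1 ∧ (Rt t).det = 1)
    (hderiv : ∀ t : ℝ,
      HasDerivAt Rt (Rt t * hatMap ![pp t, q t, r t] - hatMap (ωD t) * Rt t) t)
    (hcontW : Continuous fun t => (![pp t, q t, r t] : Fin 3 → ℝ))
    (hcontD : Continuous ωD) :
    ∀ t : ℝ,
      HasDerivAt (fun s => Psi (Rt s))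
        (eR (Rt t) ⬝ᵥ (![q t, r t] - PiR.mulVec ((Rt t)ᵀ.mulVec (ωD t)))) t := by
  intro t
  obtain ⟨h1, h2⟩ := hSO t
  have h3 : Rt t * (Rt t)ᵀ = 1 := mul_eq_one_comm.mp h1
  have hadj : (Rt t).adjugate = (Rt t)ᵀ := by
    have h4 : (Rt t).adjugate * Rt t = 1 := by rw [adjugate_mul, h2, one_smul]
    calc (Rt t).adjugate = (Rt t).adjugate * (Rt t * (Rt t)ᵀ) := by rw [h3, mul_one]
      _ = (Rt t)ᵀ := by rw [← mul_assoc, h4, one_mul]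
  rw [adjugate_fin_three] at hadj
  have e1 := congrFun (congrFun hadj 0) 1
  have e2 := congrFun (congrFun hadj 0) 2
  simp [Matrix.transpose_apply] at e1 e2
  have hd := hasDerivAt_pi.mp (hasDerivAt_pi.mp (hderiv t) 0) 0
  have hd2 := (hd.const_sub 1).const_mul (1 / 2 : ℝ)
  unfold Psi
  refine hd2.congr_deriv ?_
  simp [hatMap, eR, PiR, Matrix.mul_apply, Matrix.vecMul, dotProduct, Fin.sum_univ_three,
    Fin.sum_univ_two]
  linear_combination (1 / 2 : ℝ) * (ωD t 2) * e1 - (1 / 2 : ℝ) * (ωD t 1) * e2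
end

section
/- Let R̃ : ℝ → ℝ^{3×3} be differentiable with R̃(t) ∈ SO(3) for all t and R̃′(t) = R̃(t)·(ω_W(t))^∧ − (ω_D(t))^∧·R̃(t), where ω_W = [p, q, r]^⊤. Suppose the pitch- and yaw-rates exactly track the command (13), i.e., [q(t), r(t)]^⊤ = Π_R R̃(t)^⊤ ω_D(t) − 2 k_{R̃} e_{R̃}(t) for some constant k_{R̃} > 0. Then d/dt Ψ(R̃(t)) = −2 k_{R̃} ‖e_{R̃}(t)‖² = −2 k_{R̃} Ψ(R̃(t)) (1 − Ψ(R̃(t))); in particular Ψ(R̃(t)) is nonincreasing. -/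
open Matrix

attribute [local instance] Matrix.normedAddCommGroup Matrix.normedSpace

/-- if `R̃(t) ∈ SO(3)` satisfies `R̃′ = R̃(ω_W)^∧ − (ω_D)^∧ R̃` with
`ω_W = [p, q, r]ᵀ`, and the pitch- and yaw-rates exactly track the command (13), i.e.
`[q, r]ᵀ = Π_R R̃ᵀ ω_D − 2 k_{R̃} e_{R̃}` with `k_{R̃} > 0`, then
`d/dt Ψ(R̃(t)) = −2k_{R̃}‖e_{R̃}‖² = −2k_{R̃}Ψ(R̃)(1 − Ψ(R̃))`; in particular `Ψ(R̃(t))`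
is nonincreasing. -/
theorem attitude_error_decreases_under_command
    (Rt : ℝ → Matrix (Fin 3) (Fin 3) ℝ)
    (pp q r : ℝ → ℝ) (ωD : ℝ → Fin 3 → ℝ) (kR : ℝ) (hkR : 0 < kR)
    (hSO : ∀ t : ℝ, (Rt t)ᵀ * Rt t = 1 ∧ (Rt t).det = 1)
    (hderiv : ∀ t : ℝ,
      HasDerivAt Rt (Rt t * hatMap ![pp t, q t, r t] - hatMap (ωD t) * Rt t) t)
    (htrack : ∀ t : ℝ,
      (![q t, r t] : Fin 2 → ℝ)
        = PiR.mulVec ((Rt t)ᵀ.mulVec (ωD t)) - (2 * kR) • eR (Rt t)) :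
    (∀ t : ℝ,
      HasDerivAt (fun s => Psi (Rt s)) (-(2 * kR) * (eR (Rt t) ⬝ᵥ eR (Rt t))) t ∧
      -(2 * kR) * (eR (Rt t) ⬝ᵥ eR (Rt t))
        = -(2 * kR) * (Psi (Rt t) * (1 - Psi (Rt t)))) ∧
    Antitone fun t => Psi (Rt t) := by
  have key : ∀ t : ℝ,
      HasDerivAt (fun s => Psi (Rt s)) (-(2 * kR) * (eR (Rt t) ⬝ᵥ eR (Rt t))) t ∧
      -(2 * kR) * (eR (Rt t) ⬝ᵥ eR (Rt t))
        = -(2 * kR) * (Psi (Rt t) * (1 - Psi (Rt t))) := by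
    intro t
    obtain ⟨h1, hdet⟩ := hSO t
    have h2 : Rt t * (Rt t)ᵀ = 1 := mul_eq_one_comm.mp h1
    have hadj : (Rt t).adjugate = (Rt t)ᵀ := by
      calc (Rt t).adjugate = ((Rt t)ᵀ * Rt t) * (Rt t).adjugate := by rw [h1, one_mul]
        _ = (Rt t)ᵀ := by rw [mul_assoc, Matrix.mul_adjugate, hdet, one_smul, mul_one]
    have hrow : Rt t 0 0 * Rt t 0 0 + Rt t 0 1 * Rt t 0 1 + Rt t 0 2 * Rt t 0 2 = 1 := by
      have := congrFun (congrFun h2 0) 0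
      simpa [Matrix.mul_apply, Fin.sum_univ_three] using this
    have hc1 : Rt t 0 2 * Rt t 2 1 - Rt t 0 1 * Rt t 2 2 = Rt t 1 0 := by
      have := congrFun (congrFun hadj 0) 1
      simp [Matrix.adjugate_fin_three] at this
      linarith
    have hc2 : Rt t 0 1 * Rt t 1 2 - Rt t 0 2 * Rt t 1 1 = Rt t 2 0 := by
      have := congrFun (congrFun hadj 0) 2
      simp [Matrix.adjugate_fin_three] at this
      linarith
    have hq := congrFun (htrack t) 0
    have hr := congrFun (htrack t) 1
    simp [PiR, eR, Matrix.vecMul, dotProduct, Fin.sum_univ_three] at hq hr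
    have hd : HasDerivAt (fun s => Rt s 0 0)
        ((Rt t * hatMap ![pp t, q t, r t] - hatMap (ωD t) * Rt t) 0 0) t :=
      hasDerivAt_pi.1 (hasDerivAt_pi.1 (hderiv t) 0) 0
    constructor
    · have h3 := (hd.const_sub 1).const_mul (1 / 2 : ℝ)
      refine HasDerivAt.congr_deriv h3 ?_
      simp [hatMap, eR, Matrix.mul_apply, Matrix.vecMul, dotProduct, Fin.sum_univ_three]
      rw [hq, hr]
      linear_combination (1 / 2 : ℝ) * (ωD t 2) * hc1 - (1 / 2 : ℝ) * (ωD t 1) * hc2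
    · simp only [Psi, eR, dotProduct, Fin.sum_univ_two, Matrix.cons_val_zero, Matrix.cons_val_one]
      linear_combination (-(kR / 2)) * hrow
  refine ⟨key, antitone_of_hasDerivAt_nonpos (fun t => (key t).1) fun t => ?_⟩
  have : 0 ≤ eR (Rt t) ⬝ᵥ eR (Rt t) := by
    simp only [dotProduct, Fin.sum_univ_two]
    nlinarith [mul_self_nonneg (eR (Rt t) 0), mul_self_nonneg (eR (Rt t) 1)]
  show -(2 * kR) * (eR (Rt t) ⬝ᵥ eR (Rt t)) ≤ 0
  nlinarith [mul_nonneg hkR.le this]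
end
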